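/- Let M ≥ 2 and let μ̂_j = A_j y + b_j (j = 1,…,M) be affine estimators with ‖A_j‖_op ≤ 1 for all j, where the noise ξ has i.i.d. N(0,σ²) coordinates. Let θ̂_pen be any minimizer over the simplex Λ^M of H_pen(θ) = C_p(θ) + (1/2)pen(θ). Then in expectation, E‖μ̂_{θ̂_pen} − f‖² ≤ E[min_{j=1,…,M} ‖μ̂_j − f‖²] + 92σ² log(eM). -/

import Mathlib

open MeasureTheory ProbabilityTheory Finset

noncomputable section

/-- Squared Euclidean norm on `Fin n → ℝ`. -/
def sqNorm {n : ℕ} (v : Fin n → ℝ) : ℝ := ∑ i, (v i) ^ 2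

/-- The simplex `Λ^M` of probability vectors in `ℝ^M`. -/
def simplex (M : ℕ) : Set (Fin M → ℝ) := {θ | (∀ j, 0 ≤ θ j) ∧ ∑ j, θ j = 1}

/-- Operator norm (ℓ²→ℓ²) of a square matrix. -/
def opNorm {n : ℕ} (A : Matrix (Fin n) (Fin n) ℝ) : ℝ :=
  sSup {c | ∃ x : Fin n → ℝ, sqNorm x ≤ 1 ∧ c = Real.sqrt (sqNorm (A.mulVec x))}

/-- The distribution of a vector with i.i.d. `N(0,σ²)` coordinates. -/
def gaussPi (n : ℕ) (σ : ℝ) : Measure (Fin n → ℝ) :=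
  Measure.pi fun _ => gaussianReal 0 ⟨σ ^ 2, sq_nonneg σ⟩

/-- The aggregated affine estimator `μ̂_θ = A_θ y + b_θ = ∑_j θ_j (A_j y + b_j)`. -/
def muV {n M : ℕ} (A : Fin M → Matrix (Fin n) (Fin n) ℝ) (b : Fin M → Fin n → ℝ)
    (y : Fin n → ℝ) (θ : Fin M → ℝ) : Fin n → ℝ :=
  ∑ j, θ j • ((A j).mulVec y + b j)

/-- Mallows' `C_p` criterion. -/
def Cp {n M : ℕ} (A : Fin M → Matrix (Fin n) (Fin n) ℝ) (b : Fin M → Fin n → ℝ)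
    (σ : ℝ) (y : Fin n → ℝ) (θ : Fin M → ℝ) : ℝ :=
  sqNorm (muV A b y θ) - 2 * ∑ i, y i * muV A b y θ i
    + 2 * σ ^ 2 * ∑ j, θ j * (A j).trace

/-- The penalty `pen(θ) = ∑_j θ_j ‖μ̂_θ - μ̂_j‖²`. -/
def pen {n M : ℕ} (A : Fin M → Matrix (Fin n) (Fin n) ℝ) (b : Fin M → Fin n → ℝ)
    (y : Fin n → ℝ) (θ : Fin M → ℝ) : ℝ :=
  ∑ j, θ j * sqNorm (muV A b y θ - ((A j).mulVec y + b j))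

/-- The penalized criterion `H_pen(θ) = C_p(θ) + pen(θ)/2`. -/
def Hpen {n M : ℕ} (A : Fin M → Matrix (Fin n) (Fin n) ℝ) (b : Fin M → Fin n → ℝ)
    (σ : ℝ) (y : Fin n → ℝ) (θ : Fin M → ℝ) : ℝ :=
  Cp A b σ y θ + pen A b y θ / 2

/-!
On the simplex `H_pen` is `‖μ̂_θ‖² / 2` plus a function linear in `θ`. Comparing its minimizer `θ̂`
with a vertex `k` along the segment between them bounds `‖μ̂_θ̂ - f‖² - ‖μ̂_k - f‖²` by the
`θ̂`-average over `j` of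
  `2 (⟪ξ, μ̂_j - μ̂_k⟫ - σ² Tr (A_j - A_k)) - ‖μ̂_j - μ̂_k‖² / 2`.
Each of these is a quadratic polynomial in the Gaussian vector `ξ`; the subtracted square pays for
the fluctuations of the rest, so its exponential moment at scale `K ≥ 40 σ²` is at most `1`. The
maximum over the `M²` pairs therefore has expectation at most `2 K log M`.
-/

open ContinuousLinearMap (adjoint)
open scoped RealInnerProductSpace

section GaussianQuadraticExponential

variable {a l : ℝ}

lemma gaussianPDFReal_smul_exp_quadratic (ha : a < 1 / 2) (w x : ℝ) :
    gaussianPDFReal 0 1 x • Real.exp (a * x ^ 2 + w * x) =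
      (√(2 * Real.pi))⁻¹ * Real.exp (w ^ 2 / (2 * (1 - 2 * a))) *
        Real.exp (-((1 - 2 * a) / 2) * (x - w / (1 - 2 * a)) ^ 2) := by
  have hpos : 1 - 2 * a ≠ 0 := by linarith
  simp only [gaussianPDFReal, smul_eq_mul, NNReal.coe_one, mul_one, sub_zero]
  rw [mul_assoc, mul_assoc, ← Real.exp_add, ← Real.exp_add]
  congr 2
  field_simp
  ring

lemma integrable_exp_quadratic_gaussianReal (ha : a < 1 / 2) (w : ℝ) :
    Integrable (fun x : ℝ => Real.exp (a * x ^ 2 + w * x)) (gaussianReal 0 1) := by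
  rw [gaussianReal_of_var_ne_zero _ one_ne_zero,
    integrable_withDensity_iff_integrable_smul' (measurable_gaussianPDF 0 1)
      (ae_of_all _ fun _ => gaussianPDF_lt_top)]
  simp only [toReal_gaussianPDF, gaussianPDFReal_smul_exp_quadratic ha w]
  exact ((integrable_exp_neg_mul_sq (by linarith)).comp_sub_right _).const_mul _

lemma integral_exp_quadratic_gaussianReal (ha : a < 1 / 2) (w : ℝ) :
    ∫ x, Real.exp (a * x ^ 2 + w * x) ∂(gaussianReal 0 1) =
      (√(1 - 2 * a))⁻¹ * Real.exp (w ^ 2 / (2 * (1 - 2 * a))) := by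
  have hnorm : (√(2 * Real.pi))⁻¹ * √(Real.pi / ((1 - 2 * a) / 2)) = (√(1 - 2 * a))⁻¹ := by
    rw [← Real.sqrt_inv, ← Real.sqrt_inv, ← Real.sqrt_mul (by positivity)]
    congr 1
    field_simp
  rw [integral_gaussianReal_eq_integral_smul one_ne_zero]
  simp only [gaussianPDFReal_smul_exp_quadratic ha w]
  rw [integral_const_mul,
    integral_sub_right_eq_self (fun x => Real.exp (-((1 - 2 * a) / 2) * x ^ 2)),
    integral_gaussian, mul_right_comm, hnorm]

lemma inv_sqrt_one_sub_two_mul_le_exp (ha : a < 1 / 2) :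
    (√(1 - 2 * a))⁻¹ ≤ Real.exp (a + 2 * a ^ 2 / (1 - 2 * a)) := by
  have hpos : 0 < 1 - 2 * a := by linarith
  have hexponent : ((1 - 2 * a)⁻¹ - 1) / 2 = a + 2 * a ^ 2 / (1 - 2 * a) := by
    field_simp
    ring
  rw [← Real.sqrt_inv, ← hexponent, Real.exp_half]
  exact Real.sqrt_le_sqrt (by linarith [Real.add_one_le_exp ((1 - 2 * a)⁻¹ - 1)])

lemma integral_exp_quadratic_gaussianReal_le (hal : a ≤ l) (hl : l < 1 / 2) (w : ℝ) :
    ∫ x, Real.exp (a * x ^ 2 + w * x) ∂(gaussianReal 0 1) ≤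
      Real.exp (a + 2 * a ^ 2 / (1 - 2 * l) + w ^ 2 / (2 * (1 - 2 * l))) := by
  have hlpos : 0 < 1 - 2 * l := by linarith
  rw [integral_exp_quadratic_gaussianReal (hal.trans_lt hl)]
  refine (mul_le_mul_of_nonneg_right (inv_sqrt_one_sub_two_mul_le_exp (hal.trans_lt hl))
    (Real.exp_pos _).le).trans ?_
  rw [← Real.exp_add]
  gcongr

end GaussianQuadraticExponential

section StdGaussian

variable {E : Type*} [NormedAddCommGroup E] [InnerProductSpace ℝ E]
  {ι : Type*} [Fintype ι] (e : OrthonormalBasis ι ℝ E) {T : E →ₗ[ℝ] E} {d : ι → ℝ}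

lemma inner_apply_sum_smul_of_eigenbasis (hd : ∀ i, T (e i) = d i • e i) (x : ι → ℝ) :
    ⟪T (∑ i, x i • e i), ∑ i, x i • e i⟫ = ∑ i, d i * x i ^ 2 := by
  simp only [map_sum, map_smul, hd, smul_smul, e.orthonormal.inner_sum]
  exact Finset.sum_congr rfl fun i _ => by simp only [conj_trivial]; ring

lemma exp_inner_add_inner_sum_smul_of_eigenbasis (hd : ∀ i, T (e i) = d i • e i) (v : E)
    (x : ι → ℝ) :
    Real.exp (⟪T (∑ i, x i • e i), ∑ i, x i • e i⟫ + ⟪v, ∑ i, x i • e i⟫) =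
      ∏ i, Real.exp (d i * x i ^ 2 + ⟪v, e i⟫ * x i) := by
  rw [inner_apply_sum_smul_of_eigenbasis e hd, ← Real.exp_sum, Finset.sum_add_distrib]
  simp only [inner_sum, inner_smul_right, mul_comm]

lemma trace_of_eigenbasis (hd : ∀ i, T (e i) = d i • e i) :
    LinearMap.trace ℝ E T = ∑ i, d i := by
  simp [LinearMap.trace_eq_sum_inner T e, hd, inner_smul_right]

lemma trace_comp_self_of_eigenbasis (hd : ∀ i, T (e i) = d i • e i) :
    LinearMap.trace ℝ E (T ∘ₗ T) = ∑ i, d i ^ 2 :=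
  trace_of_eigenbasis e fun i => by simp [hd, smul_smul, sq]

variable [FiniteDimensional ℝ E] {l : ℝ}

lemma exists_eigenbasis_of_isSymmetric (hT : T.IsSymmetric) (hTl : ∀ x, ⟪T x, x⟫ ≤ l * ‖x‖ ^ 2) :
    ∃ (e : OrthonormalBasis (Fin (Module.finrank ℝ E)) ℝ E) (d : Fin (Module.finrank ℝ E) → ℝ),
      (∀ i, T (e i) = d i • e i) ∧ ∀ i, d i ≤ l := by
  have heigen := hT.apply_eigenvectorBasis rfl
  refine ⟨hT.eigenvectorBasis rfl, hT.eigenvalues rfl, heigen, fun i => ?_⟩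
  simpa [heigen, inner_smul_left] using hTl (hT.eigenvectorBasis rfl i)

variable [MeasurableSpace E] [BorelSpace E]

lemma integrable_exp_inner_add_inner_stdGaussian_of_eigenbasis
    (hd : ∀ i, T (e i) = d i • e i) (hdl : ∀ i, d i < 1 / 2) (v : E) :
    Integrable (fun x => Real.exp (⟪T x, x⟫ + ⟪v, x⟫)) (stdGaussian E) := by
  have hT : Continuous T := T.continuous_of_finiteDimensional
  have hsum : Continuous fun x : ι → ℝ => ∑ i, x i • e i := by fun_prop
  rw [stdGaussian_eq_map_pi_orthonormalBasis e,
    integrable_map_measure (by fun_prop) hsum.aemeasurable]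
  simp only [Function.comp_def, exp_inner_add_inner_sum_smul_of_eigenbasis e hd]
  exact Integrable.fintype_prod fun i => integrable_exp_quadratic_gaussianReal (hdl i) _

lemma integral_exp_inner_add_inner_stdGaussian_le_of_eigenbasis
    (hd : ∀ i, T (e i) = d i • e i) (hdl : ∀ i, d i ≤ l) (hl : l < 1 / 2) (v : E) :
    ∫ x, Real.exp (⟪T x, x⟫ + ⟪v, x⟫) ∂(stdGaussian E) ≤
      Real.exp (LinearMap.trace ℝ E T + 2 * LinearMap.trace ℝ E (T ∘ₗ T) / (1 - 2 * l)
        + ‖v‖ ^ 2 / (2 * (1 - 2 * l))) := by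
  have hT : Continuous T := T.continuous_of_finiteDimensional
  have hsum : Continuous fun x : ι → ℝ => ∑ i, x i • e i := by fun_prop
  rw [stdGaussian_eq_map_pi_orthonormalBasis e, integral_map hsum.aemeasurable (by fun_prop)]
  simp only [exp_inner_add_inner_sum_smul_of_eigenbasis e hd]
  calc ∫ x : ι → ℝ, ∏ i, Real.exp (d i * x i ^ 2 + ⟪v, e i⟫ * x i)
        ∂(Measure.pi fun _ => gaussianReal 0 1)
      = ∏ i, ∫ x, Real.exp (d i * x ^ 2 + ⟪v, e i⟫ * x) ∂(gaussianReal 0 1) :=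
        integral_fintype_prod_eq_prod fun i x => Real.exp (d i * x ^ 2 + ⟪v, e i⟫ * x)
    _ ≤ ∏ i, Real.exp (d i + 2 * d i ^ 2 / (1 - 2 * l) + ⟪v, e i⟫ ^ 2 / (2 * (1 - 2 * l))) :=
        Finset.prod_le_prod (fun i _ => integral_nonneg fun x => (Real.exp_pos _).le)
          fun i _ => integral_exp_quadratic_gaussianReal_le (hdl i) hl _
    _ = _ := by
        rw [← Real.exp_sum, trace_of_eigenbasis e hd, trace_comp_self_of_eigenbasis e hd,
          ← e.sum_sq_inner_left v]
        simp only [Finset.sum_add_distrib, Finset.mul_sum, Finset.sum_div]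

lemma integrable_exp_inner_add_inner_stdGaussian (hT : T.IsSymmetric)
    (hTl : ∀ x, ⟪T x, x⟫ ≤ l * ‖x‖ ^ 2) (hl : l < 1 / 2) (v : E) :
    Integrable (fun x => Real.exp (⟪T x, x⟫ + ⟪v, x⟫)) (stdGaussian E) := by
  obtain ⟨e, d, hd, hdl⟩ := exists_eigenbasis_of_isSymmetric hT hTl
  exact integrable_exp_inner_add_inner_stdGaussian_of_eigenbasis e hd
    (fun i => (hdl i).trans_lt hl) v

lemma integral_exp_inner_add_inner_stdGaussian_le (hT : T.IsSymmetric)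
    (hTl : ∀ x, ⟪T x, x⟫ ≤ l * ‖x‖ ^ 2) (hl : l < 1 / 2) (v : E) :
    ∫ x, Real.exp (⟪T x, x⟫ + ⟪v, x⟫) ∂(stdGaussian E) ≤
      Real.exp (LinearMap.trace ℝ E T + 2 * LinearMap.trace ℝ E (T ∘ₗ T) / (1 - 2 * l)
        + ‖v‖ ^ 2 / (2 * (1 - 2 * l))) := by
  obtain ⟨e, d, hd, hdl⟩ := exists_eigenbasis_of_isSymmetric hT hTl
  exact integral_exp_inner_add_inner_stdGaussian_le_of_eigenbasis e hd hdl hl v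

end StdGaussian

section CompensatedNoise

variable {E : Type*} [NormedAddCommGroup E] [InnerProductSpace ℝ E]

/-- The centred noise contribution `2 (⟪x, B x + c⟫ - σ² Tr B)` of an affine map `x ↦ B x + c`,
compensated by half of its squared norm. For two estimators whose difference on noise `x` is
`B x + c`, this is what the noise can add to the excess of one `C_p` value over the other once the
penalty has been taken into account. -/
def compensatedNoise (σ : ℝ) (B : E →L[ℝ] E) (c x : E) : ℝ :=
  2 * (⟪x, B x + c⟫ - σ ^ 2 * LinearMap.trace ℝ E B) - ‖B x + c‖ ^ 2 / 2

lemma continuous_compensatedNoise (σ : ℝ) (B : E →L[ℝ] E) (c : E) :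
    Continuous (compensatedNoise σ B c) := by
  unfold compensatedNoise
  fun_prop

variable [FiniteDimensional ℝ E]

/-- The symmetric operator representing the quadratic part `2 ⟪x, B x⟫ - ‖B x‖² / 2` of
`compensatedNoise`. -/
def noiseForm (B : E →L[ℝ] E) : E →L[ℝ] E := B + adjoint B - (1 / 2 : ℝ) • (adjoint B ∘L B)

lemma isSymmetric_noiseForm (B : E →L[ℝ] E) : (noiseForm B : E →ₗ[ℝ] E).IsSymmetric := by
  intro x y
  simp only [noiseForm, ContinuousLinearMap.coe_coe, sub_apply,
    add_apply, smul_apply, ContinuousLinearMap.comp_apply,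
    inner_sub_left, inner_sub_right, inner_add_left, inner_add_right, inner_smul_left,
    inner_smul_right, ContinuousLinearMap.adjoint_inner_left,
    ContinuousLinearMap.adjoint_inner_right, conj_trivial]
  ring

lemma inner_noiseForm_self (B : E →L[ℝ] E) (x : E) :
    ⟪noiseForm B x, x⟫ = 2 * ⟪x, B x⟫ - ‖B x‖ ^ 2 / 2 := by
  simp only [noiseForm, sub_apply,
    add_apply, smul_apply, ContinuousLinearMap.comp_apply,
    inner_sub_left, inner_add_left, inner_smul_left, ContinuousLinearMap.adjoint_inner_left,
    conj_trivial, real_inner_self_eq_norm_sq]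
  rw [real_inner_comm x (B x)]
  ring

lemma inner_noiseForm_self_le (B : E →L[ℝ] E) (x : E) : ⟪noiseForm B x, x⟫ ≤ 2 * ‖x‖ ^ 2 := by
  have hsq : ‖(2 : ℝ) • x - B x‖ ^ 2 = 4 * ‖x‖ ^ 2 - 4 * ⟪x, B x⟫ + ‖B x‖ ^ 2 := by
    rw [norm_sub_sq_real, norm_smul, inner_smul_left, mul_pow]
    norm_num
    ring
  rw [inner_noiseForm_self]
  linarith [sq_nonneg ‖(2 : ℝ) • x - B x‖]

variable {ι : Type*} [Fintype ι] (e : OrthonormalBasis ι ℝ E)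

lemma trace_adjoint_comp_self (B : E →L[ℝ] E) :
    LinearMap.trace ℝ E (adjoint B ∘L B : E →L[ℝ] E) = ∑ i, ‖B (e i)‖ ^ 2 := by
  simp [LinearMap.trace_eq_sum_inner _ e, ContinuousLinearMap.adjoint_inner_right]

lemma sum_norm_sq_adjoint_apply (B : E →L[ℝ] E) :
    ∑ i, ‖adjoint B (e i)‖ ^ 2 = ∑ i, ‖B (e i)‖ ^ 2 := by
  rw [← trace_adjoint_comp_self e, ← trace_adjoint_comp_self e,
    ContinuousLinearMap.adjoint_adjoint]
  exact LinearMap.trace_mul_comm ℝ (B : E →ₗ[ℝ] E) (adjoint B)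

lemma trace_adjoint (B : E →L[ℝ] E) :
    LinearMap.trace ℝ E (adjoint B) = LinearMap.trace ℝ E B := by
  simp [LinearMap.trace_eq_sum_inner _ (stdOrthonormalBasis ℝ E),
    ContinuousLinearMap.adjoint_inner_right, real_inner_comm]

lemma trace_noiseForm (B : E →L[ℝ] E) :
    LinearMap.trace ℝ E (noiseForm B) =
      2 * LinearMap.trace ℝ E B - (∑ i, ‖B (e i)‖ ^ 2) / 2 := by
  simp only [noiseForm, ContinuousLinearMap.toLinearMap_sub, ContinuousLinearMap.toLinearMap_add,
    ContinuousLinearMap.toLinearMap_smul, map_sub, map_add, map_smul, trace_adjoint,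
    trace_adjoint_comp_self e, smul_eq_mul]
  ring

lemma norm_two_smul_sub_adjoint_apply_le {B : E →L[ℝ] E} (hB : ‖B‖ ≤ 2) (c : E) :
    ‖(2 : ℝ) • c - adjoint B c‖ ≤ 4 * ‖c‖ := by
  have hadj : ‖adjoint B c‖ ≤ 2 * ‖c‖ :=
    (adjoint B).le_of_opNorm_le (by rwa [LinearIsometryEquiv.norm_map]) c
  have htwo : ‖(2 : ℝ) • c‖ = 2 * ‖c‖ := by simp [norm_smul]
  linarith [norm_sub_le ((2 : ℝ) • c) (adjoint B c)]

lemma norm_noiseForm_apply_le {B : E →L[ℝ] E} (hB : ‖B‖ ≤ 2) (x : E) :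
    ‖noiseForm B x‖ ≤ ‖adjoint B x‖ + 2 * ‖B x‖ := by
  have hsplit : noiseForm B x = adjoint B x + (1 / 2 : ℝ) • ((2 : ℝ) • B x - adjoint B (B x)) := by
    simp only [noiseForm, sub_apply, add_apply,
      smul_apply, ContinuousLinearMap.comp_apply]
    module
  have hhalf : ‖(1 / 2 : ℝ) • ((2 : ℝ) • B x - adjoint B (B x))‖ ≤ 2 * ‖B x‖ := by
    rw [norm_smul, Real.norm_of_nonneg (by norm_num)]
    linarith [norm_two_smul_sub_adjoint_apply_le hB (B x)]
  rw [hsplit]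
  exact (norm_add_le _ _).trans (by gcongr)

lemma trace_noiseForm_comp_self_le {B : E →L[ℝ] E} (hB : ‖B‖ ≤ 2) :
    LinearMap.trace ℝ E ((noiseForm B : E →ₗ[ℝ] E) ∘ₗ noiseForm B) ≤
      9 * ∑ i, ‖B (e i)‖ ^ 2 := by
  have htrace : LinearMap.trace ℝ E ((noiseForm B : E →ₗ[ℝ] E) ∘ₗ noiseForm B) =
      ∑ i, ‖noiseForm B (e i)‖ ^ 2 := by
    rw [LinearMap.trace_eq_sum_inner _ e]
    refine sum_congr rfl fun i _ => ?_
    rw [LinearMap.comp_apply, ← isSymmetric_noiseForm B]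
    exact real_inner_self_eq_norm_sq _
  -- Young's inequality `(p + 2q)² ≤ 3p² + 6q²`; the two sums are both the Frobenius norm of `B`.
  have hyoung (i : ι) :
      ‖noiseForm B (e i)‖ ^ 2 ≤ 3 * ‖adjoint B (e i)‖ ^ 2 + 6 * ‖B (e i)‖ ^ 2 := by
    have hsq := pow_le_pow_left₀ (norm_nonneg _) (norm_noiseForm_apply_le hB (e i)) 2
    linarith [sq_nonneg (‖adjoint B (e i)‖ - ‖B (e i)‖)]
  calc LinearMap.trace ℝ E ((noiseForm B : E →ₗ[ℝ] E) ∘ₗ noiseForm B)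
      ≤ ∑ i, (3 * ‖adjoint B (e i)‖ ^ 2 + 6 * ‖B (e i)‖ ^ 2) :=
        htrace ▸ sum_le_sum fun i _ => hyoung i
    _ = 9 * ∑ i, ‖B (e i)‖ ^ 2 := by
        rw [sum_add_distrib, ← mul_sum, ← mul_sum, sum_norm_sq_adjoint_apply e B]
        ring

lemma compensatedNoise_smul (σ : ℝ) (B : E →L[ℝ] E) (c g : E) :
    compensatedNoise σ B c (σ • g) =
      σ ^ 2 * ⟪noiseForm B g, g⟫ + σ * ⟪(2 : ℝ) • c - adjoint B c, g⟫
        - 2 * σ ^ 2 * LinearMap.trace ℝ E B - ‖c‖ ^ 2 / 2 := by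
  rw [compensatedNoise, inner_noiseForm_self, norm_add_sq_real, inner_sub_left,
    ContinuousLinearMap.adjoint_inner_left]
  simp only [map_smul, inner_add_right, inner_smul_left, inner_smul_right, norm_smul, mul_pow,
    Real.norm_eq_abs, sq_abs, conj_trivial, real_inner_comm (B g) c, real_inner_comm c g]
  ring

variable {σ K : ℝ}

lemma exp_compensatedNoise_smul_div (σ K : ℝ) (B : E →L[ℝ] E) (c g : E) :
    Real.exp (compensatedNoise σ B c (σ • g) / K) =
      Real.exp (⟪((σ ^ 2 / K) • (noiseForm B : E →ₗ[ℝ] E)) g, g⟫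
          + ⟪(σ / K) • ((2 : ℝ) • c - adjoint B c), g⟫) *
        Real.exp (-(2 * σ ^ 2 * LinearMap.trace ℝ E B + ‖c‖ ^ 2 / 2) / K) := by
  rw [compensatedNoise_smul, ← Real.exp_add, LinearMap.smul_apply, ContinuousLinearMap.coe_coe,
    inner_smul_left, inner_smul_left]
  congr 1
  simp only [conj_trivial]
  ring

lemma inner_smul_noiseForm_self_le (hK : 0 ≤ K) (B : E →L[ℝ] E) (x : E) :
    ⟪((σ ^ 2 / K) • (noiseForm B : E →ₗ[ℝ] E)) x, x⟫ ≤ 2 * (σ ^ 2 / K) * ‖x‖ ^ 2 := by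
  rw [LinearMap.smul_apply, ContinuousLinearMap.coe_coe, inner_smul_left, conj_trivial,
    mul_comm 2, mul_assoc]
  exact mul_le_mul_of_nonneg_left (inner_noiseForm_self_le B x) (by positivity)

-- The compensation `‖B x + c‖² / 2` has mean `(σ² ‖B‖_F² + ‖c‖²) / 2`; its first summand absorbs
-- the second-order trace term as soon as `36 τ ≤ 1 - 4 τ`, whence the constant `40`.
lemma trace_smul_noiseForm_add_le {τ : ℝ} (hτ : 0 ≤ τ) (hτ' : τ ≤ 1 / 40) {B : E →L[ℝ] E}
    (hB : ‖B‖ ≤ 2) :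
    LinearMap.trace ℝ E (τ • (noiseForm B : E →ₗ[ℝ] E))
        + 2 * LinearMap.trace ℝ E ((τ • (noiseForm B : E →ₗ[ℝ] E)) ∘ₗ
          (τ • (noiseForm B : E →ₗ[ℝ] E))) / (1 - 2 * (2 * τ)) ≤
      2 * τ * LinearMap.trace ℝ E B := by
  have hpos : 0 < 1 - 2 * (2 * τ) := by linarith
  set e := stdOrthonormalBasis ℝ E
  set frobSq := ∑ i, ‖B (e i)‖ ^ 2
  have hfrob : 0 ≤ frobSq := sum_nonneg fun i _ => sq_nonneg _
  have hsecond : 2 * (τ * (τ * (9 * frobSq))) / (1 - 2 * (2 * τ)) ≤ τ * (frobSq / 2) := by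
    rw [div_le_iff₀ hpos]
    nlinarith [mul_nonneg (mul_nonneg hτ hfrob) (sub_nonneg.2 hτ')]
  simp only [LinearMap.smul_comp, LinearMap.comp_smul, map_smul, smul_eq_mul, trace_noiseForm e]
  have hsq : 2 * (τ * (τ * LinearMap.trace ℝ E ((noiseForm B : E →ₗ[ℝ] E) ∘ₗ noiseForm B)))
      / (1 - 2 * (2 * τ)) ≤ 2 * (τ * (τ * (9 * frobSq))) / (1 - 2 * (2 * τ)) := by
    gcongr
    exact trace_noiseForm_comp_self_le e hB
  linarith

lemma norm_sq_smul_two_smul_sub_adjoint_div_le (hK : 0 < K) (hσK : 40 * σ ^ 2 ≤ K)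
    {B : E →L[ℝ] E} (hB : ‖B‖ ≤ 2) (c : E) :
    ‖(σ / K) • ((2 : ℝ) • c - adjoint B c)‖ ^ 2 / (2 * (1 - 2 * (2 * (σ ^ 2 / K)))) ≤
      ‖c‖ ^ 2 / 2 / K := by
  have hpos : 0 < K - 4 * σ ^ 2 := by nlinarith
  have hvec : ‖(2 : ℝ) • c - adjoint B c‖ ^ 2 ≤ 16 * ‖c‖ ^ 2 := by
    nlinarith [norm_two_smul_sub_adjoint_apply_le hB c, norm_nonneg ((2 : ℝ) • c - adjoint B c)]
  calc ‖(σ / K) • ((2 : ℝ) • c - adjoint B c)‖ ^ 2 / (2 * (1 - 2 * (2 * (σ ^ 2 / K))))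
      = σ ^ 2 * ‖(2 : ℝ) • c - adjoint B c‖ ^ 2 / (K - 4 * σ ^ 2) / 2 / K := by
        have : 1 - 2 * (2 * (σ ^ 2 / K)) ≠ 0 := by
          rw [show 1 - 2 * (2 * (σ ^ 2 / K)) = (K - 4 * σ ^ 2) / K by field_simp; ring]
          positivity
        rw [norm_smul, mul_pow, Real.norm_eq_abs, sq_abs]
        field_simp
        ring
    _ ≤ ‖c‖ ^ 2 / 2 / K := by
        gcongr
        rw [div_le_iff₀ hpos]
        nlinarith [mul_le_mul_of_nonneg_left hvec (sq_nonneg σ),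
          mul_nonneg (sq_nonneg ‖c‖) (sub_nonneg.2 hσK), mul_nonneg (sq_nonneg ‖c‖) (sq_nonneg σ)]

variable [MeasurableSpace E] [BorelSpace E]

lemma integrable_exp_compensatedNoise_stdGaussian (hK : 4 * σ ^ 2 < K) (B : E →L[ℝ] E) (c : E) :
    Integrable (fun g => Real.exp (compensatedNoise σ B c (σ • g) / K)) (stdGaussian E) := by
  have hKpos : 0 < K := by nlinarith
  have hsmall : 2 * (σ ^ 2 / K) < 1 / 2 := by
    rw [← mul_div_assoc, div_lt_div_iff₀ hKpos two_pos]
    linarith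
  simp only [exp_compensatedNoise_smul_div]
  exact (integrable_exp_inner_add_inner_stdGaussian ((isSymmetric_noiseForm B).smul rfl)
    (inner_smul_noiseForm_self_le hKpos.le B) hsmall _).mul_const _

lemma integral_exp_compensatedNoise_stdGaussian_le_one (hK : 0 < K) (hσK : 40 * σ ^ 2 ≤ K)
    {B : E →L[ℝ] E} (hB : ‖B‖ ≤ 2) (c : E) :
    ∫ g, Real.exp (compensatedNoise σ B c (σ • g) / K) ∂(stdGaussian E) ≤ 1 := by
  have hτ' : σ ^ 2 / K ≤ 1 / 40 := by
    rw [div_le_div_iff₀ hK (by norm_num)]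
    linarith
  simp only [exp_compensatedNoise_smul_div]
  rw [integral_mul_const]
  refine (mul_le_mul_of_nonneg_right (integral_exp_inner_add_inner_stdGaussian_le
    ((isSymmetric_noiseForm B).smul rfl) (inner_smul_noiseForm_self_le hK.le B) (by linarith) _)
    (Real.exp_pos _).le).trans ?_
  have htrace := trace_smul_noiseForm_add_le (by positivity) hτ' hB
  have hvec := norm_sq_smul_two_smul_sub_adjoint_div_le hK hσK hB c
  have hconst : -(2 * σ ^ 2 * LinearMap.trace ℝ E B + ‖c‖ ^ 2 / 2) / K =
      -(2 * (σ ^ 2 / K) * LinearMap.trace ℝ E B) - ‖c‖ ^ 2 / 2 / K := by ring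
  rw [← Real.exp_add, Real.exp_le_one_iff, hconst]
  linarith

end CompensatedNoise

section QuadraticAggregation

variable {E : Type*} [NormedAddCommGroup E] [InnerProductSpace ℝ E] {ι : Type*} [Fintype ι]

lemma nonempty_of_mem_stdSimplex {θ : ι → ℝ} (hθ : θ ∈ stdSimplex ℝ ι) : Nonempty ι :=
  univ_nonempty_iff.1 (nonempty_of_sum_ne_zero (hθ.2.trans_ne one_ne_zero))

lemma sum_mul_norm_sub_sq {θ : ι → ℝ} (hθ : ∑ j, θ j = 1) (m : ι → E) (v : E) :
    ∑ j, θ j * ‖v - m j‖ ^ 2 =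
      ‖v - ∑ j, θ j • m j‖ ^ 2 + ∑ j, θ j * ‖m j‖ ^ 2 - ‖∑ j, θ j • m j‖ ^ 2 := by
  have hinner : ⟪v, ∑ j, θ j • m j⟫ = ∑ j, θ j * ⟪v, m j⟫ := by
    simp only [inner_sum, inner_smul_right]
  have hterm (j : ι) : θ j * ‖v - m j‖ ^ 2 =
      θ j * ‖v‖ ^ 2 - 2 * (θ j * ⟪v, m j⟫) + θ j * ‖m j‖ ^ 2 := by
    rw [norm_sub_sq_real]
    ring
  rw [norm_sub_sq_real, hinner, sum_congr rfl fun j _ => hterm j, sum_add_distrib,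
    sum_sub_distrib, ← sum_mul, ← mul_sum, hθ]
  ring

/-- The criterion `θ ↦ ‖∑ θ_j m_j‖² / 2 + ∑ θ_j a_j`. On the simplex `H_pen` has this form, because
`C_p + pen / 2` trades half of `‖∑ θ_j m_j‖²` for a term linear in `θ`. -/
def aggregationCriterion (m : ι → E) (a : ι → ℝ) (θ : ι → ℝ) : ℝ :=
  ‖∑ j, θ j • m j‖ ^ 2 / 2 + ∑ j, θ j * a j

variable {m : ι → E} {a : ι → ℝ} {θ : ι → ℝ}

lemma aggregationCriterion_convexCombination (m : ι → E) (a θ θ' : ι → ℝ) (t : ℝ) :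
    aggregationCriterion m a ((1 - t) • θ + t • θ') =
      (1 - t) * aggregationCriterion m a θ + t * aggregationCriterion m a θ'
        - t * (1 - t) * ‖∑ j, θ j • m j - ∑ j, θ' j • m j‖ ^ 2 / 2 := by
  have hagg : ∑ j, ((1 - t) • θ + t • θ') j • m j =
      (1 - t) • ∑ j, θ j • m j + t • ∑ j, θ' j • m j := by
    simp only [Pi.add_apply, Pi.smul_apply, smul_assoc, add_smul, sum_add_distrib, smul_sum]
  have hlin : ∑ j, ((1 - t) • θ + t • θ') j * a j =
      (1 - t) * ∑ j, θ j * a j + t * ∑ j, θ' j * a j := by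
    simp only [Pi.add_apply, Pi.smul_apply, smul_eq_mul, add_mul, sum_add_distrib, mul_sum,
      mul_assoc]
  rw [aggregationCriterion, aggregationCriterion, aggregationCriterion, hagg, hlin,
    norm_add_sq_real, norm_sub_sq_real, norm_smul, norm_smul, inner_smul_left, inner_smul_right,
    mul_pow, mul_pow, Real.norm_eq_abs, Real.norm_eq_abs, sq_abs, sq_abs, conj_trivial]
  ring

lemma aggregationCriterion_add_norm_sub_sq_le
    (hθ : θ ∈ stdSimplex ℝ ι) (hmin : IsMinOn (aggregationCriterion m a) (stdSimplex ℝ ι) θ)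
    {θ' : ι → ℝ} (hθ' : θ' ∈ stdSimplex ℝ ι) :
    aggregationCriterion m a θ + ‖∑ j, θ j • m j - ∑ j, θ' j • m j‖ ^ 2 / 2 ≤
      aggregationCriterion m a θ' := by
  set D := ‖∑ j, θ j • m j - ∑ j, θ' j • m j‖ ^ 2 / 2 with hD
  have hsegment : ∀ t ∈ Set.Ioo (0 : ℝ) 1,
      aggregationCriterion m a θ + (1 - t) * D ≤ aggregationCriterion m a θ' := by
    intro t ⟨ht0, ht1⟩
    have hle := hmin (convex_stdSimplex ℝ ι hθ hθ' (sub_nonneg.2 ht1.le) ht0.le (by ring))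
    rw [Set.mem_ofPred_eq, aggregationCriterion_convexCombination, mul_div_assoc, ← hD] at hle
    refine le_of_mul_le_mul_left ?_ ht0
    linarith
  have hlim : Filter.Tendsto (fun t : ℝ => aggregationCriterion m a θ + (1 - t) * D)
      (nhdsWithin 0 (Set.Ioi 0)) (nhds (aggregationCriterion m a θ + (1 - 0) * D)) :=
    tendsto_nhdsWithin_of_tendsto_nhds (Continuous.tendsto (by fun_prop) 0)
  rw [sub_zero, one_mul] at hlim
  exact le_of_tendsto hlim (Filter.eventually_of_mem (Ioo_mem_nhdsGT one_pos) hsegment)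

lemma aggregationCriterion_single [DecidableEq ι] (m : ι → E) (a : ι → ℝ) (k : ι) :
    aggregationCriterion m a (Pi.single k 1) = ‖m k‖ ^ 2 / 2 + a k := by
  simp [aggregationCriterion, Pi.single_apply, ite_smul]

lemma aggregationCriterion_sub_inner_add (m : ι → E) (s θ : ι → ℝ) (y : E) :
    aggregationCriterion m (fun j => ‖m j‖ ^ 2 / 2 - 2 * ⟪y, m j⟫ + 2 * s j) θ =
      ‖∑ j, θ j • m j‖ ^ 2 / 2 + (∑ j, θ j * ‖m j‖ ^ 2) / 2 - 2 * ⟪y, ∑ j, θ j • m j⟫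
        + 2 * ∑ j, θ j * s j := by
  simp only [aggregationCriterion, inner_sum, inner_smul_right, mul_add, mul_sub, sum_add_distrib,
    sum_sub_distrib, mul_left_comm _ (2 : ℝ), ← mul_sum, mul_div_assoc', ← sum_div]
  ring

lemma sum_mul_inner_sub (hθ : ∑ j, θ j = 1) (m : ι → E) (x v : E) :
    ∑ j, θ j * ⟪x, m j - v⟫ = ⟪x, ∑ j, θ j • m j⟫ - ⟪x, v⟫ := by
  simp only [inner_sub_right, mul_sub, sum_sub_distrib, ← sum_mul, hθ, one_mul, inner_sum,
    inner_smul_right]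

lemma norm_aggregate_sub_sq_le {s : ι → ℝ} {f x : E} (hθ : θ ∈ stdSimplex ℝ ι)
    (hmin : IsMinOn
      (aggregationCriterion m fun j => ‖m j‖ ^ 2 / 2 - 2 * ⟪f + x, m j⟫ + 2 * s j)
      (stdSimplex ℝ ι) θ) (k : ι) :
    ‖∑ j, θ j • m j - f‖ ^ 2 ≤ ‖m k - f‖ ^ 2
      + ∑ j, θ j * (2 * (⟪x, m j - m k⟫ - (s j - s k)) - ‖m j - m k‖ ^ 2 / 2) := by
  classical
  have hk := aggregationCriterion_add_norm_sub_sq_le hθ hmin (single_mem_stdSimplex ℝ k)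
  have hnoise : ∑ j, θ j * (2 * (⟪x, m j - m k⟫ - (s j - s k)) - ‖m j - m k‖ ^ 2 / 2) =
      2 * (∑ j, θ j * ⟪x, m j - m k⟫ - (∑ j, θ j * s j - s k))
        - (∑ j, θ j * ‖m k - m j‖ ^ 2) / 2 := by
    simp only [mul_sub, sum_sub_distrib, mul_left_comm _ (2 : ℝ), ← mul_sum, ← sum_mul, hθ.2,
      mul_div_assoc', ← sum_div, one_mul, norm_sub_rev (m k)]
  have hsum : ∑ j, (Pi.single k 1 : ι → ℝ) j • m j = m k := by
    simp [Pi.single_apply, ite_smul]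
  rw [aggregationCriterion_sub_inner_add, aggregationCriterion_single, hsum] at hk
  rw [hnoise, sum_mul_inner_sub hθ.2, sum_mul_norm_sub_sq hθ.2, norm_sub_sq_real,
    norm_sub_sq_real (m k) f, norm_sub_rev (m k)]
  simp only [inner_add_left, real_inner_comm f] at hk ⊢
  linarith

end QuadraticAggregation

section AffineEstimators

variable {E : Type*} [NormedAddCommGroup E] [InnerProductSpace ℝ E] {ι : Type*} [Fintype ι]

/-- The penalized criterion `H_pen` of the affine estimators `T j y + c j`, for weights on the
simplex and with the penalty expanded. -/
def penalizedCriterion (σ : ℝ) (T : ι → E →L[ℝ] E) (c : ι → E) (y : E) : (ι → ℝ) → ℝ :=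
  aggregationCriterion (fun j => T j y + c j) fun j =>
    ‖T j y + c j‖ ^ 2 / 2 - 2 * ⟪y, T j y + c j⟫ + 2 * (σ ^ 2 * LinearMap.trace ℝ E (T j))

/-- The compensated noise of the difference of the estimators `j` and `k`, at noise `x`. -/
def pairNoise (σ : ℝ) (T : ι → E →L[ℝ] E) (c : ι → E) (f : E) (j k : ι) (x : E) : ℝ :=
  compensatedNoise σ (T j - T k) ((T j - T k) f + (c j - c k)) x

lemma norm_aggregate_sub_sq_le_add_sum_pairNoise {σ : ℝ} {T : ι → E →L[ℝ] E} {c : ι → E}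
    {f x : E} {θ : ι → ℝ} (hθ : θ ∈ stdSimplex ℝ ι)
    (hmin : IsMinOn (penalizedCriterion σ T c (f + x)) (stdSimplex ℝ ι) θ) (k : ι) :
    ‖∑ j, θ j • (T j (f + x) + c j) - f‖ ^ 2 ≤
      ‖T k (f + x) + c k - f‖ ^ 2 + ∑ j, θ j * pairNoise σ T c f j k x := by
  have hdiff (j : ι) : T j (f + x) + c j - (T k (f + x) + c k) =
      (T j - T k) x + ((T j - T k) f + (c j - c k)) := by
    simp only [map_add, sub_apply]
    abel
  have htrace (j : ι) : LinearMap.trace ℝ E (T j - T k : E →L[ℝ] E) =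
      LinearMap.trace ℝ E (T j) - LinearMap.trace ℝ E (T k) := by
    rw [ContinuousLinearMap.toLinearMap_sub, map_sub]
  simpa only [pairNoise, compensatedNoise, hdiff, htrace, mul_sub (σ ^ 2)] using
    norm_aggregate_sub_sq_le hθ hmin k

lemma norm_aggregate_sub_sq_le_iInf_add {σ : ℝ} {T : ι → E →L[ℝ] E} {c : ι → E} {f x : E}
    {θ : ι → ℝ} (hθ : θ ∈ stdSimplex ℝ ι)
    (hmin : IsMinOn (penalizedCriterion σ T c (f + x)) (stdSimplex ℝ ι) θ) {w : ℝ}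
    (hw : ∀ j k, pairNoise σ T c f j k x ≤ w) :
    ‖∑ j, θ j • (T j (f + x) + c j) - f‖ ^ 2 ≤ (⨅ k, ‖T k (f + x) + c k - f‖ ^ 2) + w := by
  have : Nonempty ι := nonempty_of_mem_stdSimplex hθ
  refine sub_le_iff_le_add.1 (le_ciInf fun k => sub_le_iff_le_add.2 ?_)
  have hnoise : ∑ j, θ j * pairNoise σ T c f j k x ≤ w :=
    calc ∑ j, θ j * pairNoise σ T c f j k x
        ≤ ∑ j, θ j * w := sum_le_sum fun j _ => mul_le_mul_of_nonneg_left (hw j k) (hθ.1 j)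
      _ = w := by rw [← sum_mul, hθ.2, one_mul]
  linarith [norm_aggregate_sub_sq_le_add_sum_pairNoise hθ hmin k]

end AffineEstimators

section Maximal

variable {Ω : Type*} [MeasurableSpace Ω] {P : Measure Ω} [IsProbabilityMeasure P]
  {ι : Type*} [Fintype ι] [Nonempty ι] {K : ℝ}

lemma le_log_card_sub_one_add_mean_exp (z : ι → ℝ) (i : ι) :
    z i ≤ Real.log (Fintype.card ι) - 1 + (∑ j, Real.exp (z j)) / Fintype.card ι := by
  have hcard : (0 : ℝ) < Fintype.card ι := by exact_mod_cast Fintype.card_pos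
  have hexp : Real.exp (z i - Real.log (Fintype.card ι)) ≤
      (∑ j, Real.exp (z j)) / Fintype.card ι := by
    rw [Real.exp_sub, Real.exp_log hcard]
    gcongr
    exact single_le_sum (fun j _ => (Real.exp_pos (z j)).le) (mem_univ i)
  linarith [Real.add_one_le_exp (z i - Real.log (Fintype.card ι))]

lemma exists_integrable_forall_le_of_integral_exp_le_one (hK : 0 < K) {Z : ι → Ω → ℝ}
    (hint : ∀ i, Integrable (fun ω => Real.exp (Z i ω / K)) P)
    (hle : ∀ i, ∫ ω, Real.exp (Z i ω / K) ∂P ≤ 1) :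
    ∃ W : Ω → ℝ, Integrable W P ∧ (∀ i ω, Z i ω ≤ W ω) ∧
      ∫ ω, W ω ∂P ≤ K * Real.log (Fintype.card ι) := by
  have hcard : (0 : ℝ) < Fintype.card ι := by exact_mod_cast Fintype.card_pos
  have hmean : Integrable (fun ω => (∑ i, Real.exp (Z i ω / K)) / Fintype.card ι) P :=
    (integrable_finsetSum _ fun i _ => hint i).div_const _
  have hmean_le : ∫ ω, (∑ i, Real.exp (Z i ω / K)) / Fintype.card ι ∂P ≤ 1 := by
    rw [integral_div, integral_finsetSum _ fun i _ => hint i, div_le_one hcard]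
    exact (sum_le_sum fun i _ => hle i).trans (by simp)
  refine ⟨fun ω => K * (Real.log (Fintype.card ι) - 1
    + (∑ i, Real.exp (Z i ω / K)) / Fintype.card ι),
    ((integrable_const _).add hmean).const_mul K, fun i ω => ?_, ?_⟩
  · rw [← div_le_iff₀' hK]
    exact le_log_card_sub_one_add_mean_exp (fun i => Z i ω / K) i
  · rw [integral_const_mul, integral_add (integrable_const _) hmean, integral_const, probReal_univ,
      one_smul]
    gcongr
    linarith

end Maximal

section Integrability

variable {Ω : Type*} [MeasurableSpace Ω] {P : Measure Ω}

lemma integrable_iInf {ι : Type*} [Finite ι] [Nonempty ι] {g : ι → Ω → ℝ}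
    (hg : ∀ i, Integrable (g i) P) : Integrable (fun ω => ⨅ i, g i ω) P := by
  have := Fintype.ofFinite ι
  have hinf : Integrable (univ.inf' univ_nonempty g) P :=
    inf'_induction univ_nonempty g (p := (Integrable · P)) (fun _ h _ h' => h.inf h')
      fun i _ => hg i
  convert hinf using 2 with ω
  rw [Finset.inf'_apply, inf'_univ_eq_ciInf]

lemma integrable_norm_sq_affine [IsFiniteMeasure P] {E : Type*} [NormedAddCommGroup E]
    [NormedSpace ℝ E] {X : Ω → E} (hX : MemLp X 2 P) (T : E →L[ℝ] E) (f v : E) :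
    Integrable (fun ω => ‖T (f + X ω) + v - f‖ ^ 2) P := by
  have hlin : MemLp (fun ω => T (f + X ω) + v - f) 2 P :=
    ((T.comp_memLp' ((memLp_const f).add hX)).add (memLp_const v)).sub (memLp_const f)
  exact hlin.integrable_norm_pow two_ne_zero

end Integrability

section OracleInequality

variable {E : Type*} [NormedAddCommGroup E] [InnerProductSpace ℝ E] [FiniteDimensional ℝ E]
  [MeasurableSpace E] [BorelSpace E] {Ω : Type*} [MeasurableSpace Ω] {P : Measure Ω}
  {σ K : ℝ} {X : Ω → E}

lemma hasGaussianLaw_of_hasLaw_smul_stdGaussian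
    (hX : HasLaw X ((stdGaussian E).map fun g => σ • g) P) : HasGaussianLaw X P where
  isGaussian_map := by
    rw [hX.map_eq]
    exact inferInstanceAs (IsGaussian ((stdGaussian E).map (σ • ContinuousLinearMap.id ℝ E)))

lemma integrable_exp_compensatedNoise_of_hasLaw
    (hX : HasLaw X ((stdGaussian E).map fun g => σ • g) P) (hK : 4 * σ ^ 2 < K)
    (B : E →L[ℝ] E) (c : E) :
    Integrable (fun ω => Real.exp (compensatedNoise σ B c (X ω) / K)) P := by
  have hcont := continuous_compensatedNoise σ B c
  have hmap : Integrable (fun x => Real.exp (compensatedNoise σ B c x / K)) (P.map X) := by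
    rw [hX.map_eq, integrable_map_measure (by fun_prop) (by fun_prop)]
    exact integrable_exp_compensatedNoise_stdGaussian hK B c
  exact hmap.comp_aemeasurable hX.aemeasurable

lemma integral_exp_compensatedNoise_le_one_of_hasLaw
    (hX : HasLaw X ((stdGaussian E).map fun g => σ • g) P) (hK : 0 < K) (hσK : 40 * σ ^ 2 ≤ K)
    {B : E →L[ℝ] E} (hB : ‖B‖ ≤ 2) (c : E) :
    ∫ ω, Real.exp (compensatedNoise σ B c (X ω) / K) ∂P ≤ 1 := by
  have hcont := continuous_compensatedNoise σ B c
  calc ∫ ω, Real.exp (compensatedNoise σ B c (X ω) / K) ∂P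
      = ∫ x, Real.exp (compensatedNoise σ B c x / K) ∂((stdGaussian E).map fun g => σ • g) :=
        hX.integral_comp (f := fun x => Real.exp (compensatedNoise σ B c x / K)) (by fun_prop)
    _ = ∫ g, Real.exp (compensatedNoise σ B c (σ • g) / K) ∂(stdGaussian E) :=
        integral_map (by fun_prop) (by fun_prop)
    _ ≤ 1 := integral_exp_compensatedNoise_stdGaussian_le_one hK hσK hB c

lemma exists_integrable_forall_pairNoise_le {ι : Type*} [Fintype ι] [Nonempty ι]
    (hX : HasLaw X ((stdGaussian E).map fun g => σ • g) P) (hK : 0 < K) (hσK : 40 * σ ^ 2 ≤ K)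
    {T : ι → E →L[ℝ] E} (hT : ∀ j k, ‖T j - T k‖ ≤ 2) (c : ι → E) (f : E) :
    ∃ W : Ω → ℝ, Integrable W P ∧ (∀ j k ω, pairNoise σ T c f j k (X ω) ≤ W ω) ∧
      ∫ ω, W ω ∂P ≤ 2 * K * Real.log (Fintype.card ι) := by
  have := (hasGaussianLaw_of_hasLaw_smul_stdGaussian hX).isProbabilityMeasure
  obtain ⟨W, hW, hle, hlog⟩ := exists_integrable_forall_le_of_integral_exp_le_one hK
    (Z := fun (p : ι × ι) ω => pairNoise σ T c f p.1 p.2 (X ω))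
    (fun p => integrable_exp_compensatedNoise_of_hasLaw hX (by nlinarith) _ _)
    (fun p => integral_exp_compensatedNoise_le_one_of_hasLaw hX hK hσK (hT p.1 p.2) _)
  refine ⟨W, hW, fun j k => hle (j, k), hlog.trans_eq ?_⟩
  rw [Fintype.card_prod, Nat.cast_mul, ← sq, Real.log_pow]
  push_cast
  ring

variable {ι : Type*} [Fintype ι] {T : ι → E →L[ℝ] E} {c : ι → E} {f : E} {θ : Ω → ι → ℝ}

lemma integral_norm_aggregate_sub_sq_le_of_le
    (hX : HasLaw X ((stdGaussian E).map fun g => σ • g) P) (hK : 0 < K) (hσK : 40 * σ ^ 2 ≤ K)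
    (hT : ∀ j k, ‖T j - T k‖ ≤ 2) (hθmeas : AEMeasurable θ P) (hθ : ∀ ω, θ ω ∈ stdSimplex ℝ ι)
    (hmin : ∀ ω, IsMinOn (penalizedCriterion σ T c (f + X ω)) (stdSimplex ℝ ι) (θ ω)) :
    Integrable (fun ω => ‖∑ j, θ ω j • (T j (f + X ω) + c j) - f‖ ^ 2) P ∧
      ∫ ω, ‖∑ j, θ ω j • (T j (f + X ω) + c j) - f‖ ^ 2 ∂P ≤
        ∫ ω, (⨅ j, ‖T j (f + X ω) + c j - f‖ ^ 2) ∂P + 2 * K * Real.log (Fintype.card ι) := by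
  have hgauss := hasGaussianLaw_of_hasLaw_smul_stdGaussian hX
  have := hgauss.isProbabilityMeasure
  obtain ⟨ω₀⟩ := P.nonempty_of_neZero
  have : Nonempty ι := nonempty_of_mem_stdSimplex (hθ ω₀)
  obtain ⟨W, hW, hnoise, hlog⟩ := exists_integrable_forall_pairNoise_le hX hK hσK hT c f
  have hbound (ω : Ω) := norm_aggregate_sub_sq_le_iInf_add (hθ ω) (hmin ω) (hnoise · · ω)
  have hbest : Integrable (fun ω => ⨅ j, ‖T j (f + X ω) + c j - f‖ ^ 2) P :=
    integrable_iInf fun j => integrable_norm_sq_affine hgauss.memLp_two (T j) f (c j)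
  have hcont : Continuous fun p : (ι → ℝ) × E => ‖∑ j, p.1 j • (T j (f + p.2) + c j) - f‖ ^ 2 := by
    fun_prop
  have hmeas := hcont.comp_aestronglyMeasurable
    (hθmeas.aestronglyMeasurable.prodMk hX.aemeasurable.aestronglyMeasurable)
  have hrisk : Integrable (fun ω => ‖∑ j, θ ω j • (T j (f + X ω) + c j) - f‖ ^ 2) P :=
    (hbest.add hW).mono' hmeas (ae_of_all _ fun ω => by simpa using hbound ω)
  refine ⟨hrisk, (integral_mono hrisk (hbest.add hW) hbound).trans ?_⟩
  simp only [Pi.add_apply]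
  rw [integral_add hbest hW]
  gcongr

lemma integral_norm_aggregate_sub_sq_le
    (hX : HasLaw X ((stdGaussian E).map fun g => σ • g) P)
    (hT : ∀ j k, ‖T j - T k‖ ≤ 2) (hθmeas : AEMeasurable θ P) (hθ : ∀ ω, θ ω ∈ stdSimplex ℝ ι)
    (hmin : ∀ ω, IsMinOn (penalizedCriterion σ T c (f + X ω)) (stdSimplex ℝ ι) (θ ω)) :
    Integrable (fun ω => ‖∑ j, θ ω j • (T j (f + X ω) + c j) - f‖ ^ 2) P ∧
      ∫ ω, ‖∑ j, θ ω j • (T j (f + X ω) + c j) - f‖ ^ 2 ∂P ≤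
        ∫ ω, (⨅ j, ‖T j (f + X ω) + c j - f‖ ^ 2) ∂P
          + 80 * σ ^ 2 * Real.log (Fintype.card ι) := by
  have hbound (K : ℝ) (hK : K ∈ Set.Ioi (40 * σ ^ 2)) :=
    have hσK : 40 * σ ^ 2 < K := hK
    integral_norm_aggregate_sub_sq_le_of_le hX (by nlinarith) hσK.le hT hθmeas hθ hmin
  refine ⟨(hbound _ (lt_add_one (40 * σ ^ 2))).1, ?_⟩
  have hlim : Filter.Tendsto
      (fun K : ℝ => ∫ ω, (⨅ j, ‖T j (f + X ω) + c j - f‖ ^ 2) ∂P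
        + 2 * K * Real.log (Fintype.card ι)) (nhdsWithin (40 * σ ^ 2) (Set.Ioi (40 * σ ^ 2)))
      (nhds (∫ ω, (⨅ j, ‖T j (f + X ω) + c j - f‖ ^ 2) ∂P
        + 2 * (40 * σ ^ 2) * Real.log (Fintype.card ι))) :=
    tendsto_nhdsWithin_of_tendsto_nhds (Continuous.tendsto (by fun_prop) _)
  rw [← mul_assoc 2, show (2 : ℝ) * 40 = 80 by norm_num] at hlim
  exact ge_of_tendsto hlim (Filter.eventually_of_mem self_mem_nhdsWithin
    fun K hK => (hbound K hK).2)

end OracleInequality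

section EuclideanCoordinates

variable {n M : ℕ}

lemma sqNorm_eq_norm_toLp_sq (v : Fin n → ℝ) : sqNorm v = ‖WithLp.toLp 2 v‖ ^ 2 :=
  (EuclideanSpace.real_norm_sq_eq (WithLp.toLp 2 v)).symm

lemma opNorm_eq_norm_toEuclideanCLM (A : Matrix (Fin n) (Fin n) ℝ) :
    opNorm A = ‖Matrix.toEuclideanCLM (𝕜 := ℝ) A‖ := by
  rw [← ContinuousLinearMap.sSup_unitClosedBall_eq_norm, opNorm]
  congr 1
  ext r
  simp only [sqNorm_eq_norm_toLp_sq, Real.sqrt_sq (norm_nonneg _),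
    sq_le_one_iff₀ (norm_nonneg _), ← Matrix.toEuclideanCLM_toLp, Set.mem_image,
    mem_closedBall_zero_iff]
  exact ⟨fun ⟨x, hx, hr⟩ => ⟨WithLp.toLp 2 x, hx, hr.symm⟩,
    fun ⟨x, hx, hr⟩ => ⟨x.ofLp, hx, hr.symm⟩⟩

lemma opNorm_sub_le (A B : Matrix (Fin n) (Fin n) ℝ) : opNorm (A - B) ≤ opNorm A + opNorm B := by
  simp only [opNorm_eq_norm_toEuclideanCLM, map_sub]
  exact norm_sub_le _ _

lemma trace_toEuclideanCLM (A : Matrix (Fin n) (Fin n) ℝ) :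
    LinearMap.trace ℝ (EuclideanSpace ℝ (Fin n)) (Matrix.toEuclideanCLM (𝕜 := ℝ) A) = A.trace := by
  rw [Matrix.coe_toEuclideanCLM_eq_toEuclideanLin]
  exact A.trace_toLin_eq (PiLp.basisFun 2 ℝ (Fin n))

lemma map_toLp_gaussPi (n : ℕ) (σ : ℝ) :
    (gaussPi n σ).map (WithLp.toLp 2) =
      (stdGaussian (EuclideanSpace ℝ (Fin n))).map fun g => σ • g := by
  have hscale : gaussPi n σ =
      (Measure.pi fun _ : Fin n => gaussianReal 0 1).map fun x i => σ * x i := by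
    rw [Measure.pi_map_pi fun _ => by fun_prop]
    simp only [gaussianReal_map_const_mul, gaussPi, mul_zero, mul_one]
    rfl
  rw [hscale, ← map_pi_eq_stdGaussian, Measure.map_map (by fun_prop) (by fun_prop),
    Measure.map_map (by fun_prop) (by fun_prop)]
  rfl

lemma toLp_muV (A : Fin M → Matrix (Fin n) (Fin n) ℝ) (b : Fin M → Fin n → ℝ) (y : Fin n → ℝ)
    (θ : Fin M → ℝ) :
    WithLp.toLp 2 (muV A b y θ) = ∑ j, θ j •
      (Matrix.toEuclideanCLM (𝕜 := ℝ) (A j) (WithLp.toLp 2 y) + WithLp.toLp 2 (b j)) := by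
  simp [muV, WithLp.toLp_sum]

lemma pen_eq_sum_sub (A : Fin M → Matrix (Fin n) (Fin n) ℝ) (b : Fin M → Fin n → ℝ)
    (y : Fin n → ℝ) {θ : Fin M → ℝ} (hθ : ∑ j, θ j = 1) :
    pen A b y θ =
      ∑ j, θ j *
          ‖Matrix.toEuclideanCLM (𝕜 := ℝ) (A j) (WithLp.toLp 2 y) + WithLp.toLp 2 (b j)‖ ^ 2
        - ‖∑ j, θ j •
          (Matrix.toEuclideanCLM (𝕜 := ℝ) (A j) (WithLp.toLp 2 y) + WithLp.toLp 2 (b j))‖ ^ 2 := by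
  simp only [pen, sqNorm_eq_norm_toLp_sq, WithLp.toLp_sub, WithLp.toLp_add,
    ← Matrix.toEuclideanCLM_toLp, toLp_muV, sum_mul_norm_sub_sq hθ, sub_self, norm_zero]
  ring

lemma Hpen_eq_penalizedCriterion (A : Fin M → Matrix (Fin n) (Fin n) ℝ) (b : Fin M → Fin n → ℝ)
    (σ : ℝ) (y : Fin n → ℝ) {θ : Fin M → ℝ} (hθ : ∑ j, θ j = 1) :
    Hpen A b σ y θ = penalizedCriterion σ (fun j => Matrix.toEuclideanCLM (𝕜 := ℝ) (A j))
      (fun j => WithLp.toLp 2 (b j)) (WithLp.toLp 2 y) θ := by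
  have hinner : ∑ i, y i * muV A b y θ i =
      ⟪WithLp.toLp 2 y, WithLp.toLp 2 (muV A b y θ)⟫ := by
    simp only [PiLp.inner_apply, RCLike.inner_apply, conj_trivial, mul_comm]
  have htrace : σ ^ 2 * ∑ j, θ j * (A j).trace = ∑ j, θ j * (σ ^ 2 * (A j).trace) := by
    rw [mul_sum]
    exact sum_congr rfl fun j _ => mul_left_comm _ _ _
  rw [Hpen, Cp, pen_eq_sum_sub A b y hθ, hinner, sqNorm_eq_norm_toLp_sq, toLp_muV,
    penalizedCriterion, aggregationCriterion_sub_inner_add, mul_assoc, htrace]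
  simp only [trace_toEuclideanCLM]
  ring

lemma isMinOn_penalizedCriterion_toLp {σ : ℝ}
    {A : Fin M → Matrix (Fin n) (Fin n) ℝ} {b : Fin M → Fin n → ℝ} {y : Fin n → ℝ} {θ : Fin M → ℝ}
    (hθ : θ ∈ simplex M)
    (hmin : ∀ θ' ∈ simplex M, Hpen A b σ y θ ≤ Hpen A b σ y θ') :
    IsMinOn (penalizedCriterion σ (fun j => Matrix.toEuclideanCLM (𝕜 := ℝ) (A j))
      (fun j => WithLp.toLp 2 (b j)) (WithLp.toLp 2 y)) (stdSimplex ℝ (Fin M)) θ := by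
  refine isMinOn_iff.2 fun θ' hθ' => ?_
  rw [← Hpen_eq_penalizedCriterion A b σ y hθ.2, ← Hpen_eq_penalizedCriterion A b σ y hθ'.2]
  exact hmin θ' hθ'

end EuclideanCoordinates

theorem sharp_oracle_inequality_expectation_general
    {n M : ℕ} (σ : ℝ) (f : Fin n → ℝ)
    (A : Fin M → Matrix (Fin n) (Fin n) ℝ) (b : Fin M → Fin n → ℝ)
    (hop : ∀ j k, opNorm (A j - A k) ≤ 2)
    {Ω : Type*} [MeasurableSpace Ω] (P : Measure Ω)
    (ξ : Ω → Fin n → ℝ) (hlaw : HasLaw ξ (gaussPi n σ) P)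
    (θhat : Ω → Fin M → ℝ) (hθmeas : AEMeasurable θhat P)
    (hθmem : ∀ ω, θhat ω ∈ simplex M)
    (hθmin : ∀ ω, ∀ θ ∈ simplex M,
      Hpen A b σ (f + ξ ω) (θhat ω) ≤ Hpen A b σ (f + ξ ω) θ) :
    Integrable (fun ω => sqNorm (muV A b (f + ξ ω) (θhat ω) - f)) P ∧
      ∫ ω, sqNorm (muV A b (f + ξ ω) (θhat ω) - f) ∂P ≤
        (∫ ω, (⨅ j, sqNorm ((A j).mulVec (f + ξ ω) + b j - f)) ∂P)
          + 80 * σ ^ 2 * Real.log M := by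
  have hX : HasLaw (fun ω => WithLp.toLp 2 (ξ ω))
      ((stdGaussian (EuclideanSpace ℝ (Fin n))).map fun g => σ • g) P :=
    HasLaw.fun_comp ⟨by fun_prop, map_toLp_gaussPi n σ⟩ hlaw
  have hT (j k : Fin M) :
      ‖Matrix.toEuclideanCLM (𝕜 := ℝ) (A j) - Matrix.toEuclideanCLM (𝕜 := ℝ) (A k)‖ ≤ 2 := by
    rw [← map_sub, ← opNorm_eq_norm_toEuclideanCLM]
    exact hop j k
  have horacle := integral_norm_aggregate_sub_sq_le hX hT hθmeas hθmem
    fun ω => isMinOn_penalizedCriterion_toLp (hθmem ω) (hθmin ω)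
  simpa only [sqNorm_eq_norm_toLp_sq, WithLp.toLp_sub, WithLp.toLp_add, toLp_muV,
    ← Matrix.toEuclideanCLM_toLp, Fintype.card_fin] using horacle

/-- **Theorem 2.1 (main result), bound in expectation.** -/
theorem sharp_oracle_inequality_expectation
    {n M : ℕ} (hM : 2 ≤ M) (σ : ℝ) (f : Fin n → ℝ)
    (A : Fin M → Matrix (Fin n) (Fin n) ℝ) (b : Fin M → Fin n → ℝ)
    (hop : ∀ j, opNorm (A j) ≤ 1)
    {Ω : Type} [MeasurableSpace Ω] (P : Measure Ω) [IsProbabilityMeasure P]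
    (ξ : Ω → Fin n → ℝ) (hξ : Measurable ξ) (hlaw : P.map ξ = gaussPi n σ)
    (θhat : Ω → Fin M → ℝ) (hθmeas : Measurable θhat)
    (hθmem : ∀ ω, θhat ω ∈ simplex M)
    (hθmin : ∀ ω, ∀ θ ∈ simplex M,
      Hpen A b σ (f + ξ ω) (θhat ω) ≤ Hpen A b σ (f + ξ ω) θ) :
    ∫ ω, sqNorm (muV A b (f + ξ ω) (θhat ω) - f) ∂P ≤
      (∫ ω, (⨅ j, sqNorm ((A j).mulVec (f + ξ ω) + b j - f)) ∂P)
        + 92 * σ ^ 2 * Real.log (Real.exp 1 * M) := by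
  have hdiff (j k : Fin M) : opNorm (A j - A k) ≤ 2 := by
    linarith [opNorm_sub_le (A j) (A k), hop j, hop k]
  refine (sharp_oracle_inequality_expectation_general σ f A b hdiff P ξ ⟨hξ.aemeasurable, hlaw⟩
    θhat hθmeas.aemeasurable hθmem hθmin).2.trans ?_
  have hMpos : (0 : ℝ) < M := by positivity
  gcongr
  · norm_num
  · exact le_mul_of_one_le_left hMpos.le (Real.one_le_exp zero_le_one)

end
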